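/- The graph J_4 on vertices {1,…,9} with edge set {12, 13, 23, 45, 46, 56, 17, 27, 47, 57, 18, 38, 48, 68, 29, 39, 59, 69} has representation number exactly 4: it is 4-representable but not 3-representable. Moreover, J_4 is not a comparability graph. -/

import Mathlib

/-!
The graph consists of two disjoint triangles `{0,1,2}` and `{3,4,5}` and three independent vertices
`6`, `7`, `8`, which are attached to the pairs `{0,1}`, `{0,2}`, `{1,2}` of the first triangle and
to the corresponding pairs of the second.

*Representability by 4-uniform words* is witnessed by an explicit word of length 36.

*Non-representability by `k`-uniform words for `k ≤ 3`* is an exhaustive search with pruning,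
evaluated by the kernel. In a `k`-uniform word representing the graph, the subword on the letters
`0, 1, 2` is the `k`-th power of one of the six orderings of these letters, and each ordering is
carried to `012` by an automorphism of the graph (`UniformRep.exists_normalized`). From `(012)^k`
the remaining letters are inserted one after the other, in all ways that respect the required
alternations and non-alternations with the letters already present. No word on all nine letters
survives. The search `extendAll` quantifies over candidates in continuation-passing style: it
returns `true` when every surviving candidate satisfies a given Boolean predicate, and
`extendAll_sound` says that the restriction of a representing word is always such a candidate.
Whether `x` alternates with `y` is read off the word from left to right by means of bit masks
(`conflicts`, `conflicts_iff`).

*No transitive orientation exists*: in such an orientation, an edge `x → y` and an edge `yz` with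
`xz` not an edge force `z → y`, and similarly at the tail. From `6 → 0` one is forced to `8 → 2` and
`2 → 0`, although `8` and `0` are not adjacent; the case `0 → 6` follows by reversing all arrows.
-/

/-- Letters `x` and `y` alternate in the word `w` if the subsequence of `w` consisting of
all occurrences of `x` and `y` has no two equal consecutive letters (i.e. is of the form
`xyxy⋯` or `yxyx⋯`). -/
def Alternate {V : Type*} [DecidableEq V] (w : List V) (x y : V) : Prop :=
  (w.filter (fun z => decide (z = x ∨ z = y))).Chain' (· ≠ ·)

/-- A word `w` over `V` represents the simple graph `G` if it contains every letter of `V`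
and distinct letters alternate in `w` iff they are adjacent in `G`. -/
def Represents {V : Type*} [DecidableEq V] (w : List V) (G : SimpleGraph V) : Prop :=
  (∀ v : V, v ∈ w) ∧ ∀ x y : V, x ≠ y → (Alternate w x y ↔ G.Adj x y)

/-- A graph is word-representable if some word represents it. -/
def WordRepresentable {V : Type*} [DecidableEq V] (G : SimpleGraph V) : Prop :=
  ∃ w : List V, Represents w G

/-- A graph is `k`-representable if some `k`-uniform word (every letter occurring
exactly `k` times) represents it. -/
def KRepresentable {V : Type*} [DecidableEq V] (G : SimpleGraph V) (k : ℕ) : Prop :=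
  ∃ w : List V, (∀ v : V, w.count v = k) ∧ Represents w G

/-- An orientation of a simple graph `G`: each edge gets exactly one of its two directions. -/
structure GraphOrientation {V : Type*} (G : SimpleGraph V) where
  dir : V → V → Prop
  adj_iff : ∀ x y, G.Adj x y ↔ (dir x y ∨ dir y x)
  not_both : ∀ x y, ¬(dir x y ∧ dir y x)

/-- An orientation is acyclic if it has no directed cycle. -/
def GraphOrientation.Acyclic {V : Type*} {G : SimpleGraph V} (o : GraphOrientation G) : Prop :=
  ∀ v : V, ¬ Relation.TransGen o.dir v v

/-- An orientation has no shortcut of length `k` if for every directed path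
`v 0 → v 1 → ⋯ → v k` (with `k` edges) such that the edge `v 0 → v k` is present,
all edges `v i → v j` for `i < j` are present. -/
def GraphOrientation.NoShortcutOfLength {V : Type*} {G : SimpleGraph V}
    (o : GraphOrientation G) (k : ℕ) : Prop :=
  ∀ v : Fin (k + 1) → V,
    (∀ i : Fin k, o.dir (v i.castSucc) (v i.succ)) →
    o.dir (v 0) (v (Fin.last k)) →
    ∀ i j : Fin (k + 1), i < j → o.dir (v i) (v j)

/-- An orientation is semi-transitive if it has no shortcut of any length:
for every directed path `v_1 → ⋯ → v_k`, either the edge `v_1 → v_k` is absent, or it is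
present and all edges `v_i → v_j` for `i < j` are present. -/
def GraphOrientation.SemiTransitive {V : Type*} {G : SimpleGraph V}
    (o : GraphOrientation G) : Prop :=
  ∀ k : ℕ, o.NoShortcutOfLength k

/-- A graph is a comparability graph if it admits a transitive orientation. -/
def IsComparability {V : Type*} (G : SimpleGraph V) : Prop :=
  ∃ o : GraphOrientation G, ∀ x y z, o.dir x y → o.dir y z → o.dir x z

/-- The graph `J_4` on vertices `{1,…,9}` (here `{0,…,8}`) with edges
`12, 13, 23, 45, 46, 56, 17, 27, 47, 57, 18, 38, 48, 68, 29, 39, 59, 69`. -/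
def J4 : SimpleGraph (Fin 9) :=
  SimpleGraph.fromRel (fun a b =>
    (a, b) ∈ ([(0, 1), (0, 2), (1, 2), (3, 4), (3, 5), (4, 5),
               (0, 6), (1, 6), (3, 6), (4, 6),
               (0, 7), (2, 7), (3, 7), (5, 7),
               (1, 8), (2, 8), (4, 8), (5, 8)] : List (Fin 9 × Fin 9)))

/-! ### The search -/

/-- The neighbourhoods of the graph as bit masks: bit `y` of `nbrMask x` is set iff `x` and `y` are
adjacent. -/
def nbrMask : ℕ → ℕ
  | 0 => 198
  | 1 => 325
  | 2 => 387
  | 3 => 240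
  | 4 => 360
  | 5 => 408
  | 6 => 27
  | 7 => 45
  | 8 => 54
  | _ => 0

/-- The part of the search after the last copy of the new letter: the rest `u` of the old word is
copied. Throughout the search, `S` is the set of old letters, `N` the set of those which have to
alternate with the new letter `x`, `seen` the set of letters read since the last `x` (or since the
beginning), and `bad` the set of letters already known not to alternate with `x`. A branch is
abandoned, with value `true`, once `bad` meets `N`. The surviving words are those whose final
`bad` is `S \ N`, and `K` is evaluated on them.

This function and `scan` are written with recursors, and with the bare functions `Nat.land`,
`Nat.lor`, `Nat.xor`, `Nat.pow`, to keep their evaluation in the kernel cheap. In `Bool.rec a b c`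
the value `a` belongs to `c = false`. -/
def finish (S N : ℕ) (u : List ℕ) : ℕ → ℕ → (List ℕ → Bool) → Bool :=
  List.rec
    (fun _ bad K => Bool.rec true (K []) (Nat.beq (Nat.land bad S) (Nat.xor S N)))
    (fun c _ ih seen bad K =>
      Bool.rec true
        (ih (Nat.lor seen (Nat.pow 2 c)) (Nat.lor bad (Nat.land seen (Nat.pow 2 c)))
          (fun t => K (c :: t)))
        (Nat.beq (Nat.land (Nat.lor bad (Nat.land seen (Nat.pow 2 c))) N) 0))
    u

/-- Runs `ins`, which inserts the next copy of the new letter, at every position of the rest `u` of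
the old word, as long as the letters copied before that position cause no forbidden conflict. -/
def scan (N : ℕ) (ins : List ℕ → ℕ → ℕ → (List ℕ → Bool) → Bool) (u : List ℕ) :
    ℕ → ℕ → (List ℕ → Bool) → Bool :=
  List.rec (fun seen bad K => ins [] seen bad K)
    (fun c u ih seen bad K =>
      Bool.rec false
        (Bool.rec true
          (ih (Nat.lor seen (Nat.pow 2 c)) (Nat.lor bad (Nat.land seen (Nat.pow 2 c)))
            (fun t => K (c :: t)))
          (Nat.beq (Nat.land (Nat.lor bad (Nat.land seen (Nat.pow 2 c))) N) 0))
        (ins (c :: u) seen bad K))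
    u

/-- Tests `K` on all words that arise from `u` by inserting `k` copies of `x` such that, among the
letters of `S`, the ones alternating with `x` are exactly those of `N`. The mask `A` is the set of
letters that have to occur before the next `x`: it is empty before the first copy of `x` and equal
to `S` afterwards, so inserting `x` adds `A \ seen` to `bad`. -/
def insertAll (x S N : ℕ) : ℕ → ℕ → List ℕ → ℕ → ℕ → (List ℕ → Bool) → Bool
  | 0, _, u, seen, bad, K => finish S N u seen bad K
  | k + 1, A, u, seen, bad, K =>
    scan N (fun u seen bad K =>
      bif Nat.beq (Nat.land (Nat.lor bad (Nat.xor A (Nat.land A seen))) N) 0 then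
        insertAll x S N k S u 0 (Nat.lor bad (Nat.xor A (Nat.land A seen))) (fun t => K (x :: t))
      else true) u seen bad K

/-- Inserts `k` copies of each letter of the list, one letter after the other, into a word over the
letters of the mask `S`, and tests `K` on all resulting words whose alternations are those
prescribed by `nbrMask`. -/
def extendAll (k : ℕ) (K : List ℕ → Bool) : List ℕ → ℕ → List ℕ → Bool
  | [], _, u => K u
  | x :: xs, S, u =>
    insertAll x S (Nat.land (nbrMask x) S) k 0 u 0 0
      (fun v => extendAll k K xs (Nat.lor S (Nat.pow 2 x)) v)

/-! ### Soundness of the search -/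

/-- The final value of the mask `bad` of the search when it is run along the complete word `v`. -/
def conflicts (x S : ℕ) : List ℕ → ℕ → ℕ → ℕ → ℕ
  | [], _, _, bad => bad
  | c :: v, A, seen, bad =>
    if c = x then conflicts x S v S 0 (Nat.lor bad (Nat.xor A (Nat.land A seen)))
    else conflicts x S v A (Nat.lor seen (Nat.pow 2 c)) (Nat.lor bad (Nat.land seen (Nat.pow 2 c)))

theorem testBit_nat_lor (a b i : ℕ) : (Nat.lor a b).testBit i = (a.testBit i || b.testBit i) :=
  Nat.testBit_or a b i

theorem testBit_nat_land (a b i : ℕ) : (Nat.land a b).testBit i = (a.testBit i && b.testBit i) :=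
  Nat.testBit_and a b i

theorem testBit_nat_xor (a b i : ℕ) :
    (Nat.xor a b).testBit i = (a.testBit i ^^ b.testBit i) :=
  Nat.testBit_xor a b i

theorem testBit_nat_pow (c i : ℕ) : (Nat.pow 2 c).testBit i = decide (c = i) :=
  Nat.testBit_two_pow

theorem conflicts_mono (x S y : ℕ) (v : List ℕ) : ∀ A seen bad : ℕ, bad.testBit y = true →
    (conflicts x S v A seen bad).testBit y = true := by
  induction v with
  | nil => intro A seen bad h; exact h
  | cons c v ih =>
    intro A seen bad h
    rw [conflicts]
    split_ifs
    · exact ih _ _ _ (by rw [testBit_nat_lor, h]; rfl)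
    · exact ih _ _ _ (by rw [testBit_nat_lor, h]; rfl)

/-- The masks detect alternation: `y` ends up in `conflicts` iff it was there before or `x`, `y` fail
to alternate in `v`, where `v` is preceded by the last letter among `x`, `y` read so far, as
recorded in `seen` and `A`. -/
theorem conflicts_iff (x S y : ℕ) (hxy : x ≠ y) (hy : S.testBit y = true) (v : List ℕ) :
    ∀ A seen bad : ℕ, (conflicts x S v A seen bad).testBit y = true ↔
      (bad.testBit y = true ∨
        ¬ ((if seen.testBit y then [y] else if A.testBit y then [x] else []) ++
            v.filter (fun z => decide (z = x ∨ z = y))).IsChain (· ≠ ·)) := by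
  induction v with
  | nil =>
    intro A seen bad
    rw [conflicts]
    split_ifs <;> simp
  | cons c v ih =>
    intro A seen bad
    rw [conflicts]
    by_cases hcx : c = x
    · subst hcx
      rw [if_pos rfl, ih]
      simp only [testBit_nat_lor, testBit_nat_xor, testBit_nat_land, Nat.zero_testBit, hy]
      cases seen.testBit y <;> cases A.testBit y <;> simp [hxy.symm]
    · rw [if_neg hcx, ih]
      simp only [testBit_nat_lor, testBit_nat_land, testBit_nat_pow]
      by_cases hcy : c = y
      · subst hcy
        cases seen.testBit c <;> cases A.testBit c <;> simp [hxy]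
      · cases seen.testBit y <;> cases A.testBit y <;> simp [hcy, hcx]

/-- The mask `m` of conflicts is the required one: `N ⊆ S`, and the letters of `S` in conflict with the
new letter are those outside `N`. -/
def Compatible (S N m : ℕ) : Prop :=
  ∀ y, (S.testBit y = true → (m.testBit y = true ↔ N.testBit y = false)) ∧
    (N.testBit y = true → S.testBit y = true)

/-- The pruning test never fails along an admissible word, because `bad` only grows. -/
theorem Compatible.land_eq_zero {x S N : ℕ} {v : List ℕ} {A seen bad : ℕ}
    (h : Compatible S N (conflicts x S v A seen bad)) : Nat.beq (Nat.land bad N) 0 = true := by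
  rw [Nat.beq_eq]
  refine Nat.eq_of_testBit_eq fun y => ?_
  rw [testBit_nat_land, Nat.zero_testBit]
  have h1 := conflicts_mono x S y v A seen bad
  have h2 := h y
  cases hb : bad.testBit y <;> cases hN : N.testBit y <;> simp_all

theorem finish_sound (x S N : ℕ) (v : List ℕ) : ∀ (A seen bad : ℕ) (K : List ℕ → Bool),
    x ∉ v → Compatible S N (conflicts x S v A seen bad) →
    finish S N v seen bad K = true → K v = true := by
  induction v with
  | nil =>
    intro A seen bad K _ hc hf
    have : Nat.beq (Nat.land bad S) (Nat.xor S N) = true := by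
      rw [Nat.beq_eq]
      refine Nat.eq_of_testBit_eq fun y => ?_
      rw [testBit_nat_land, testBit_nat_xor]
      have := hc y
      rw [conflicts] at this
      cases hb : bad.testBit y <;> cases hN : N.testBit y <;> cases hS : S.testBit y <;> simp_all
    change (Bool.rec true (K []) (Nat.beq (Nat.land bad S) (Nat.xor S N)) : Bool) = true at hf
    rw [this] at hf
    exact hf
  | cons c v ih =>
    intro A seen bad K hx hc hf
    have hcx : c ≠ x := fun h => hx (by simp [h])
    rw [conflicts, if_neg hcx] at hc
    change (Bool.rec true (finish S N v (Nat.lor seen (Nat.pow 2 c))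
      (Nat.lor bad (Nat.land seen (Nat.pow 2 c))) (fun t => K (c :: t)))
      (Nat.beq (Nat.land (Nat.lor bad (Nat.land seen (Nat.pow 2 c))) N) 0) : Bool) = true at hf
    rw [hc.land_eq_zero] at hf
    exact ih A _ _ _ (fun h => hx (by simp [h])) hc hf

theorem scan_cons (N : ℕ) (ins : List ℕ → ℕ → ℕ → (List ℕ → Bool) → Bool) (c : ℕ) (u : List ℕ)
    (seen bad : ℕ) (K : List ℕ → Bool) :
    scan N ins (c :: u) seen bad K =
      (ins (c :: u) seen bad K &&
        bif Nat.beq (Nat.land (Nat.lor bad (Nat.land seen (Nat.pow 2 c))) N) 0 then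
          scan N ins u (Nat.lor seen (Nat.pow 2 c)) (Nat.lor bad (Nat.land seen (Nat.pow 2 c)))
            (fun t => K (c :: t))
        else true) := by
  change (Bool.rec false _ (ins (c :: u) seen bad K) : Bool) = _
  cases ins (c :: u) seen bad K with
  | false => rfl
  | true =>
    change (Bool.rec true _
      (Nat.beq (Nat.land (Nat.lor bad (Nat.land seen (Nat.pow 2 c))) N) 0) : Bool) = _
    cases Nat.beq (Nat.land (Nat.lor bad (Nat.land seen (Nat.pow 2 c))) N) 0 <;> rfl

/-- A successful `scan` covers the insertion at the current position. -/
theorem scan_here {N : ℕ} {ins : List ℕ → ℕ → ℕ → (List ℕ → Bool) → Bool} {u : List ℕ}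
    {seen bad : ℕ} {K : List ℕ → Bool} (h : scan N ins u seen bad K = true) :
    ins u seen bad K = true := by
  cases u with
  | nil => exact h
  | cons c u =>
    rw [scan_cons, Bool.and_eq_true] at h
    exact h.1

theorem insertAll_sound (x S N k : ℕ) : ∀ (v : List ℕ) (A seen bad : ℕ) (K : List ℕ → Bool),
    v.count x = k → Compatible S N (conflicts x S v A seen bad) →
    insertAll x S N k A (v.filter (fun z => decide (z ≠ x))) seen bad K = true →
    K v = true := by
  induction k with
  | zero =>
    intro v A seen bad K hk hc hf
    have hx : x ∉ v := List.count_eq_zero.1 hk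
    rw [List.filter_eq_self.2 (fun a ha => by simpa using fun h : a = x => hx (h ▸ ha))] at hf
    exact finish_sound x S N v A seen bad K hx hc hf
  | succ k ihk =>
    intro v A
    induction v with
    | nil => intro seen bad K hk; simp at hk
    | cons c v ihv =>
      intro seen bad K hk hc hf
      by_cases hcx : c = x
      · subst hcx
        rw [conflicts, if_pos rfl] at hc
        rw [List.filter_cons_of_neg (by simp), insertAll] at hf
        have hf := scan_here hf
        rw [hc.land_eq_zero] at hf
        exact ihk v _ _ _ (fun t => K (c :: t)) (by simpa using hk) hc hf
      · rw [conflicts, if_neg hcx] at hc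
        rw [List.filter_cons_of_pos (by simpa using hcx), insertAll, scan_cons,
          Bool.and_eq_true, hc.land_eq_zero] at hf
        exact ihv _ _ (fun t => K (c :: t)) (by simpa [hcx] using hk) hc hf.2

/-- If the search started from the subword of `w` on the letters of `S` succeeds, then `K` holds for
the subword of `w` on `S` together with the letters `xs`, provided that the letters `xs` occur `k`
times each in `w` and alternate as prescribed by `nbrMask`. -/
theorem extendAll_sound (k : ℕ) (K : List ℕ → Bool) (w : List ℕ) (xs : List ℕ) :
    ∀ S : ℕ, (∀ x ∈ xs, w.count x = k) → xs.Nodup → (∀ x ∈ xs, S.testBit x = false) →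
    (∀ x ∈ xs, ∀ y, y ≠ x → (y ∈ xs ∨ S.testBit y = true) →
      (Alternate w x y ↔ (nbrMask x).testBit y = true)) →
    extendAll k K xs S (w.filter (fun z => S.testBit z)) = true →
    K (w.filter (fun z => S.testBit z || decide (z ∈ xs))) = true := by
  induction xs with
  | nil => intro S _ _ _ _ h; simpa [extendAll] using h
  | cons x xs ih =>
    intro S hcount hnd hS halt h
    rw [List.nodup_cons] at hnd
    set v := w.filter (fun z => (Nat.lor S (Nat.pow 2 x)).testBit z) with hv
    have hSx := hS x (by simp)
    have hvS : v.filter (fun z => decide (z ≠ x)) = w.filter (fun z => S.testBit z) := by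
      rw [hv, List.filter_filter]
      refine List.filter_congr fun z _ => ?_
      rw [testBit_nat_lor, testBit_nat_pow]
      by_cases hzx : z = x
      · subst hzx; simp [hSx]
      · simp [hzx, Ne.symm hzx]
    have hvk : v.count x = k := by
      rw [hv, List.count_filter (by rw [testBit_nat_lor, testBit_nat_pow]; simp)]
      exact hcount x (by simp)
    have hcomp : Compatible S (Nat.land (nbrMask x) S) (conflicts x S v 0 0 0) := by
      intro y
      rw [testBit_nat_land]
      refine ⟨fun hy => ?_, fun h => by simp_all⟩
      have hyx : y ≠ x := by rintro rfl; simp_all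
      have hfil : v.filter (fun z => decide (z = x ∨ z = y)) =
          w.filter (fun z => decide (z = x ∨ z = y)) := by
        rw [hv, List.filter_filter]
        refine List.filter_congr fun z _ => ?_
        rw [testBit_nat_lor, testBit_nat_pow]
        by_cases h1 : z = x
        · simp [h1]
        · by_cases h2 : z = y <;> simp [h1, h2, hy]
      have := halt x (by simp) y hyx (Or.inr hy)
      rw [Alternate, List.Chain', ← hfil] at this
      rw [conflicts_iff x S y hyx.symm hy v 0 0 0]
      simp only [Nat.zero_testBit, Bool.false_eq_true, if_false, List.nil_append, false_or, this,
        hy, Bool.and_true, Bool.not_eq_true]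
    rw [extendAll, ← hvS] at h
    have h' := insertAll_sound x S _ k v 0 0 0 _ hvk hcomp h
    have := ih (Nat.lor S (Nat.pow 2 x)) (fun z hz => hcount z (by simp [hz])) hnd.2
      (fun z hz => by
        have : x ≠ z := by rintro rfl; exact hnd.1 hz
        rw [testBit_nat_lor, testBit_nat_pow, hS z (by simp [hz])]
        simpa using this)
      (fun z hz y hyz hy => by
        refine halt z (by simp [hz]) y hyz ?_
        rw [testBit_nat_lor, testBit_nat_pow] at hy
        simp only [Bool.or_eq_true, decide_eq_true_eq] at hy
        rcases hy with hy | hy | hy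
        · exact Or.inl (by simp [hy])
        · exact Or.inr hy
        · exact Or.inl (by simp [hy])) h'
    rw [← this]
    congr 1
    refine List.filter_congr fun z _ => ?_
    rw [testBit_nat_lor, testBit_nat_pow]
    simp [Bool.or_assoc, eq_comm]

/-! ### Words representing the graph -/

instance : DecidableRel J4.Adj := fun a b =>
  decidable_of_iff _ (SimpleGraph.fromRel_adj _ a b).symm

theorem J4_adj_iff : ∀ a b : Fin 9, J4.Adj a b ↔ (nbrMask a).testBit b = true := by
  decide +kernel

theorem alternate_map {V W : Type*} [DecidableEq V] [DecidableEq W] (f : V → W)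
    (hf : Function.Injective f) (w : List V) (x y : V) :
    Alternate (w.map f) (f x) (f y) ↔ Alternate w x y := by
  unfold Alternate List.Chain'
  rw [List.filter_map, List.isChain_map]
  have : ((fun z => decide (z = f x ∨ z = f y)) ∘ f) = fun z => decide (z = x ∨ z = y) := by
    funext z
    simp [hf.eq_iff]
  rw [this]
  simp only [ne_eq, hf.eq_iff]

/-- `w` is a `k`-uniform word representing the graph. -/
def UniformRep (k : ℕ) (w : List (Fin 9)) : Prop :=
  (∀ v, w.count v = k) ∧ Represents w J4

theorem UniformRep.relabel {k : ℕ} {w : List (Fin 9)} (h : UniformRep k w)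
    (σ : Fin 9 → Fin 9) (hbij : Function.Bijective σ)
    (hσ : ∀ x y, J4.Adj (σ x) (σ y) ↔ J4.Adj x y) :
    UniformRep k (w.map σ) := by
  obtain ⟨hc, hm, ha⟩ := h
  refine ⟨fun v => ?_, fun v => ?_, fun x y hxy => ?_⟩
  · obtain ⟨v, rfl⟩ := hbij.surjective v
    rw [List.count_map_of_injective _ _ hbij.injective, hc]
  · obtain ⟨v, rfl⟩ := hbij.surjective v
    exact List.mem_map_of_mem (hm v)
  · obtain ⟨x, rfl⟩ := hbij.surjective x
    obtain ⟨y, rfl⟩ := hbij.surjective y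
    rw [alternate_map _ hbij.injective, hσ]
    exact ha x y (fun h => hxy (by rw [h]))

/-- `extendAll_sound` for a word over `Fin 9`, read as a word over `ℕ`. -/
theorem UniformRep.search {k : ℕ} {w : List (Fin 9)} (h : UniformRep k w) (K : List ℕ → Bool)
    (xs : List ℕ) (S : ℕ) (hxs : ∀ x ∈ xs, x < 9) (hnd : xs.Nodup)
    (hdisj : ∀ x ∈ xs, S.testBit x = false) (hS : S < 2 ^ 9)
    (hsearch : extendAll k K xs S ((w.map Fin.val).filter (fun z => S.testBit z)) = true) :
    K ((w.map Fin.val).filter (fun z => S.testBit z || decide (z ∈ xs))) = true := by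
  refine extendAll_sound k K _ xs S (fun x hx => ?_) hnd hdisj (fun x hx y hyx hy => ?_) hsearch
  · have := List.count_map_of_injective w Fin.val Fin.val_injective ⟨x, hxs x hx⟩
    rw [h.1] at this
    exact this
  · have hy9 : y < 9 := by
      rcases hy with hy | hy
      · exact hxs y hy
      · by_contra hcon
        rw [Nat.testBit_lt_two_pow (lt_of_lt_of_le hS
          (Nat.pow_le_pow_right (by norm_num) (not_lt.1 hcon)))] at hy
        exact absurd hy (by simp)
    have h1 := alternate_map Fin.val Fin.val_injective w ⟨x, hxs x hx⟩ ⟨y, hy9⟩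
    have h2 := h.2.2 ⟨x, hxs x hx⟩ ⟨y, hy9⟩ (fun h => hyx (by simpa using h.symm))
    have h3 := J4_adj_iff ⟨x, hxs x hx⟩ ⟨y, hy9⟩
    exact h1.trans (h2.trans h3)

/-- The automorphisms of the graph induced by the permutations of `{0,1,2}`: the second triangle is
permuted in the same way, and `8 - i` is the vertex attached to the pairs that omit the `i`-th
vertex of each triangle. -/
def triangleSymmetries : List (Fin 9 → Fin 9) :=
  [![0, 1, 2, 3, 4, 5, 6, 7, 8],
   ![0, 2, 1, 3, 5, 4, 7, 6, 8],
   ![1, 0, 2, 4, 3, 5, 6, 8, 7],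
   ![1, 2, 0, 4, 5, 3, 8, 6, 7],
   ![2, 0, 1, 5, 3, 4, 7, 8, 6],
   ![2, 1, 0, 5, 4, 3, 8, 7, 6]]

theorem triangleSymmetries_spec (σ : Fin 9 → Fin 9) (hσ : σ ∈ triangleSymmetries) :
    Function.Bijective σ ∧ (∀ x y, J4.Adj (σ x) (σ y) ↔ J4.Adj x y) ∧
      ∀ x : Fin 9, (7 : ℕ).testBit (σ x) = (7 : ℕ).testBit x := by
  revert σ
  -- `List.Forall` is decided along the list; the bounded quantifier would be decided by running
  -- through all functions `Fin 9 → Fin 9`.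
  rw [← List.forall_iff_forall_mem]
  decide +kernel

/-- The word `(012)^k`. -/
def triangleWord (k : ℕ) : List ℕ := (List.replicate k [0, 1, 2]).flatten

/-- Some automorphism of the list `triangleSymmetries` carries `u` to `(012)^k`. -/
def normalizable (k : ℕ) (u : List ℕ) : Bool :=
  triangleSymmetries.any fun σ =>
    decide (u.map (fun n => (σ (Fin.ofNat 9 n)).val) = triangleWord k)

/-- Up to an automorphism, the subword on the triangle `{0,1,2}` is `(012)^k`; `7` is the mask of
this triangle. -/
theorem UniformRep.exists_normalized {k : ℕ} {w : List (Fin 9)} (h : UniformRep k w)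
    (hk : extendAll k (normalizable k) [0, 1, 2] 0 [] = true) :
    ∃ w', UniformRep k w' ∧
      (w'.map Fin.val).filter (fun z => (7 : ℕ).testBit z) = triangleWord k := by
  have h1 := h.search (normalizable k) [0, 1, 2] 0 (by decide) (by decide) (by decide) (by decide)
    (by simpa using hk)
  have h7 : (w.map Fin.val).filter
        (fun z => (0 : ℕ).testBit z || decide (z ∈ ([0, 1, 2] : List ℕ))) =
      (w.map Fin.val).filter (fun z => (7 : ℕ).testBit z) := by
    refine List.filter_congr fun z hz => ?_
    obtain ⟨a, -, rfl⟩ := List.mem_map.1 hz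
    have : ∀ a : Fin 9, ((0 : ℕ).testBit a || decide (a.val ∈ ([0, 1, 2] : List ℕ))) =
        (7 : ℕ).testBit a := by decide
    exact this a
  rw [h7, normalizable, List.any_eq_true] at h1
  obtain ⟨σ, hσ, hw⟩ := h1
  rw [decide_eq_true_eq] at hw
  obtain ⟨hbij, hadj, htri⟩ := triangleSymmetries_spec σ hσ
  refine ⟨w.map σ, h.relabel σ hbij hadj, ?_⟩
  rw [← hw, List.filter_map, List.filter_map, List.filter_map, List.map_map, List.map_map]
  have hfil : ((fun z => (7 : ℕ).testBit z) ∘ Fin.val) ∘ σ =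
      (fun z => (7 : ℕ).testBit z) ∘ Fin.val :=
    funext fun x => htri x
  rw [hfil]
  exact List.map_congr_left fun a _ => by simp

theorem not_kRepresentable_of_search (k : ℕ)
    (hk : extendAll k (normalizable k) [0, 1, 2] 0 [] = true)
    (hsearch : extendAll k (fun _ => false) [6, 7, 8, 3, 5, 4] 7 (triangleWord k) = true) :
    ¬ KRepresentable J4 k := by
  rintro ⟨w, hw⟩
  obtain ⟨w', hw', h7⟩ := UniformRep.exists_normalized hw hk
  exact Bool.false_ne_true
    (hw'.search (fun _ => false) [6, 7, 8, 3, 5, 4] 7 (by decide) (by decide) (by decide)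
      (by decide) (by rw [h7]; exact hsearch))

/-! ### The three parts of the theorem -/

theorem not_kRepresentable_zero : ¬ KRepresentable J4 0 := by
  rintro ⟨w, hc, hm, -⟩
  exact List.count_eq_zero.1 (hc 0) (hm 0)

theorem not_kRepresentable_one : ¬ KRepresentable J4 1 :=
  not_kRepresentable_of_search 1 (by decide +kernel) (by decide +kernel)

theorem not_kRepresentable_two : ¬ KRepresentable J4 2 :=
  not_kRepresentable_of_search 2 (by decide +kernel) (by decide +kernel)

theorem not_kRepresentable_three : ¬ KRepresentable J4 3 :=
  not_kRepresentable_of_search 3 (by decide +kernel) (by decide +kernel)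

theorem kRepresentable_four : KRepresentable J4 4 := by
  refine ⟨[8, 6, 0, 1, 3, 4, 6, 7, 5, 3, 2, 0, 8, 1, 7, 2, 4, 5, 6, 3, 8, 4, 0, 1, 7, 2, 6, 0, 5,
    3, 7, 8, 4, 5, 1, 2], ?_, ?_, ?_⟩
  · decide +kernel
  · decide +kernel
  · unfold Alternate List.Chain'
    decide +kernel

/-- The forcing argument, for a relation `D` that orients every edge and need not be antisymmetric.
-/
theorem no_transitive_from_six (D : Fin 9 → Fin 9 → Prop)
    (htotal : ∀ x y, J4.Adj x y → D x y ∨ D y x)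
    (htrans : ∀ x y z, D x y → D y z → J4.Adj x z) : ¬ D 6 0 := by
  intro h60
  have force : ∀ x y z, J4.Adj y z → ¬ J4.Adj x z → D x y → D z y := fun x y z hyz hxz hxy =>
    (htotal y z hyz).resolve_left fun h => hxz (htrans x y z hxy h)
  have force' : ∀ x y z, J4.Adj z x → ¬ J4.Adj z y → D x y → D x z := fun x y z hzx hzy hxy =>
    (htotal z x hzx).resolve_left fun h => hzy (htrans z x y h hxy)
  have h70 : D 7 0 := force 6 0 7 (by decide) (by decide) h60
  have h75 : D 7 5 := force' 7 0 5 (by decide) (by decide) h70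
  have h72 : D 7 2 := force' 7 5 2 (by decide) (by decide) h75
  have h82 : D 8 2 := force 7 2 8 (by decide) (by decide) h72
  have h20 : D 2 0 := force 6 0 2 (by decide) (by decide) h60
  exact absurd (htrans 8 2 0 h82 h20) (by decide)

theorem not_isComparability : ¬ IsComparability J4 := by
  rintro ⟨o, ho⟩
  rcases (o.adj_iff 6 0).1 (by decide) with h | h
  · exact no_transitive_from_six o.dir (fun x y => (o.adj_iff x y).1)
      (fun x y z hxy hyz => (o.adj_iff x z).2 (Or.inl (ho x y z hxy hyz))) h
  · exact no_transitive_from_six (fun x y => o.dir y x)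
      (fun x y hxy => ((o.adj_iff x y).1 hxy).symm)
      (fun x y z hxy hyz => (o.adj_iff x z).2 (Or.inr (ho z y x hyz hxy))) h

/-- `J_4` has representation number exactly 4: it is 4-representable but not
3-representable. Moreover, `J_4` is not a comparability graph. -/
theorem J4_repNum_four :
    IsLeast {k : ℕ | KRepresentable J4 k} 4 ∧
    KRepresentable J4 4 ∧ ¬ KRepresentable J4 3 ∧ ¬ IsComparability J4 := by
  refine ⟨⟨kRepresentable_four, fun k hk => ?_⟩, kRepresentable_four,
    not_kRepresentable_three, not_isComparability⟩
  by_contra hlt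
  have hk4 : k < 4 := not_le.1 hlt
  interval_cases k
  · exact not_kRepresentable_zero hk
  · exact not_kRepresentable_one hk
  · exact not_kRepresentable_two hk
  · exact not_kRepresentable_three hk
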